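/- arXiv:1311.6405 — 2 statements merged into one kernel-verified Lean document; each statement's English description precedes it below -/
import Mathlib

section
/- Let a ≥ 0, c > 0 and let ψ : [a,∞) → ℝ be regulated. Then there exists a function ψ^c : [a,∞) → ℝ of locally bounded variation such that sup_{t ∈ [a,∞)} |ψ^c(t) − ψ(t)| ≤ c/2 and, for every t ≥ a, TV(ψ^c,[a,t]) = TV^c(ψ,[a,t]) < ∞, UTV(ψ^c,[a,t]) = UTV^c(ψ,[a,t]) and DTV(ψ^c,[a,t]) = DTV^c(ψ,[a,t]). -/
open Filter Set Topology
open scoped ENNReal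

/-- Sum of `f` over consecutive pairs of a finite sequence of points. -/
noncomputable def genVar (f : ℝ → ℝ → ℝ) (a b : ℝ) : ℝ≥0∞ :=
  ⨆ (n : ℕ) (t : ℕ → ℝ)
    (_ : (∀ i, i < n → t i < t (i + 1)) ∧ a ≤ t 0 ∧ t n ≤ b),
    ENNReal.ofReal (∑ i ∈ Finset.range n, f (t i) (t (i + 1)))

noncomputable def TV (ψ : ℝ → ℝ) : ℝ → ℝ → ℝ≥0∞ :=
  genVar (fun s t => |ψ t - ψ s|)

noncomputable def UTV (ψ : ℝ → ℝ) : ℝ → ℝ → ℝ≥0∞ :=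
  genVar (fun s t => max (ψ t - ψ s) 0)

noncomputable def DTV (ψ : ℝ → ℝ) : ℝ → ℝ → ℝ≥0∞ :=
  genVar (fun s t => max (ψ s - ψ t) 0)

noncomputable def TVc (ψ : ℝ → ℝ) (c : ℝ) : ℝ → ℝ → ℝ≥0∞ :=
  genVar (fun s t => max (|ψ t - ψ s| - c) 0)

noncomputable def UTVc (ψ : ℝ → ℝ) (c : ℝ) : ℝ → ℝ → ℝ≥0∞ :=
  genVar (fun s t => max (ψ t - ψ s - c) 0)

noncomputable def DTVc (ψ : ℝ → ℝ) (c : ℝ) : ℝ → ℝ → ℝ≥0∞ :=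
  genVar (fun s t => max (ψ s - ψ t - c) 0)

noncomputable def TVab (ψ α β : ℝ → ℝ) : ℝ → ℝ → ℝ≥0∞ :=
  genVar (fun s t =>
    max (|(ψ t - (α t + β t) / 2) - (ψ s - (α s + β s) / 2)|
          - ((β t - α t) + (β s - α s)) / 2) 0)

noncomputable def UTVab (ψ α β : ℝ → ℝ) : ℝ → ℝ → ℝ≥0∞ :=
  genVar (fun s t =>
    max ((ψ t - (α t + β t) / 2) - (ψ s - (α s + β s) / 2)
          - ((β t - α t) + (β s - α s)) / 2) 0)

noncomputable def DTVab (ψ α β : ℝ → ℝ) : ℝ → ℝ → ℝ≥0∞ :=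
  genVar (fun s t =>
    max ((ψ s - (α s + β s) / 2) - (ψ t - (α t + β t) / 2)
          - ((β t - α t) + (β s - α s)) / 2) 0)

/-- Regulated on `[a,∞)`: right limits everywhere, left limits at points `> a`. -/
def Regulated (a : ℝ) (ψ : ℝ → ℝ) : Prop :=
  (∀ x, a ≤ x → ∃ L, Tendsto ψ (𝓝[>] x) (𝓝 L)) ∧
  (∀ x, a < x → ∃ L, Tendsto ψ (𝓝[<] x) (𝓝 L))

/-- Regulated on `[a,b]`. -/
def RegulatedOn (a b : ℝ) (ψ : ℝ → ℝ) : Prop :=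
  (∀ x, a ≤ x → x < b → ∃ L, Tendsto ψ (𝓝[>] x) (𝓝 L)) ∧
  (∀ x, a < x → x ≤ b → ∃ L, Tendsto ψ (𝓝[<] x) (𝓝 L))

/-- Values of finite chains of increments. -/
inductive Ch (f : ℝ → ℝ → ℝ) (a : ℝ) : ℕ → ℝ → ℝ → Prop
  | zero (t : ℝ) (h : a ≤ t) : Ch f a 0 t 0
  | step (n : ℕ) (x r t u : ℝ) (h : Ch f a n x u) (hx : x < r) (hr : r ≤ t) :
      Ch f a (n + 1) t (u + f x r)

theorem Ch.le {f : ℝ → ℝ → ℝ} {a t v : ℝ} {n : ℕ} (h : Ch f a n t v) : a ≤ t := by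
  induction h with
  | zero t h => exact h
  | step n x r t u h hx hr ih => linarith

theorem Ch.mono {f : ℝ → ℝ → ℝ} {a t t' v : ℝ} {n : ℕ} (h : Ch f a n t v) (ht : t ≤ t') :
    Ch f a n t' v := by
  cases h with
  | zero _ h => exact Ch.zero _ (h.trans ht)
  | step n x r t u h hx hr => exact Ch.step n x r t' u h hx (hr.trans ht)

theorem Ch.dom {f g : ℝ → ℝ → ℝ} {a t v : ℝ} {n : ℕ} (hfg : ∀ x y, f x y ≤ g x y)
    (h : Ch f a n t v) : ∃ w, v ≤ w ∧ Ch g a n t w := by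
  induction h with
  | zero t h => exact ⟨0, le_rfl, Ch.zero _ h⟩
  | step n x r t u h hx hr ih =>
    obtain ⟨w, hw, hc⟩ := ih
    exact ⟨w + g x r, add_le_add hw (hfg _ _), Ch.step n x r t w hc hx hr⟩

theorem genVar_mono {a : ℝ} {f g : ℝ → ℝ → ℝ} (hfg : ∀ x y, a ≤ x → a ≤ y → f x y ≤ g x y) (b : ℝ) :
    genVar f a b ≤ genVar g a b := by
  unfold genVar
  refine iSup_mono fun n => iSup_mono fun t => iSup_mono fun h => ?_
  have hm : ∀ i, i ≤ n → a ≤ t i := by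
    intro i
    induction i with
    | zero => intro _; exact h.2.1
    | succ i ih => intro hi; have := h.1 i (by omega); have := ih (by omega); linarith
  refine ENNReal.ofReal_le_ofReal (Finset.sum_le_sum fun i hi => ?_)
  have := Finset.mem_range.1 hi
  exact hfg _ _ (hm _ (by omega)) (hm _ (by omega))

theorem sum_ch (f : ℝ → ℝ → ℝ) (a : ℝ) (t : ℕ → ℝ) (n : ℕ)
    (h : ∀ i, i < n → t i < t (i + 1)) (h0 : a ≤ t 0) :
    ∃ m, Ch f a m (t n) (∑ i ∈ Finset.range n, max (f (t i) (t (i + 1))) 0) := by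
  induction n with
  | zero => exact ⟨0, by simpa using Ch.zero _ h0⟩
  | succ n ih =>
    obtain ⟨m, hm⟩ := ih fun i hi => h i (by omega)
    have hl := h n (by omega)
    rw [Finset.sum_range_succ]
    rcases le_total (f (t n) (t (n + 1))) 0 with hf | hf
    · rw [max_eq_right hf, add_zero]; exact ⟨m, hm.mono hl.le⟩
    · rw [max_eq_left hf]; exact ⟨m + 1, Ch.step _ _ _ _ _ hm hl le_rfl⟩

theorem genVar_le {f : ℝ → ℝ → ℝ} {a b B : ℝ} 
    (h : ∀ n v, Ch f a n b v → v ≤ B) :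
    genVar (fun x y => max (f x y) 0) a b ≤ ENNReal.ofReal B := by
  unfold genVar
  refine iSup_le fun n => iSup_le fun t => iSup_le fun ht => ?_
  obtain ⟨m, hm⟩ := sum_ch f a t n ht.1 ht.2.1
  exact ENNReal.ofReal_le_ofReal (h _ _ (hm.mono ht.2.2))

theorem part_extend (g : ℝ → ℝ → ℝ) (a x r v : ℝ) (hx : x < r)
    (h : ∃ (n : ℕ) (t : ℕ → ℝ), (∀ i, i < n → t i < t (i + 1)) ∧ a ≤ t 0 ∧ t n = x ∧
      v ≤ ∑ i ∈ Finset.range n, g (t i) (t (i + 1))) :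
    ∃ (n : ℕ) (t : ℕ → ℝ), (∀ i, i < n → t i < t (i + 1)) ∧ a ≤ t 0 ∧ t n = r ∧
      v + g x r ≤ ∑ i ∈ Finset.range n, g (t i) (t (i + 1)) := by
  obtain ⟨n, t, h1, h2, h3, h4⟩ := h
  refine ⟨n + 1, fun i => if i ≤ n then t i else r, ?_, ?_, ?_, ?_⟩
  · intro i hi
    rcases Nat.lt_or_ge i n with h | h
    · simpa [h.le, Nat.succ_le_of_lt h] using h1 i h
    · have : i = n := by omega
      subst this
      simpa [h3] using hx
  · simpa using h2
  · simp
  · rw [Finset.sum_range_succ]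
    have : ∑ i ∈ Finset.range n, g (if i ≤ n then t i else r) (if i + 1 ≤ n then t (i+1) else r)
        = ∑ i ∈ Finset.range n, g (t i) (t (i + 1)) := by
      refine Finset.sum_congr rfl fun i hi => ?_
      have := Finset.mem_range.1 hi
      rw [if_pos (by omega), if_pos (by omega)]
    simp only [this]
    simpa [h3] using h4

theorem ch_part {f : ℝ → ℝ → ℝ} {a b v : ℝ} {n : ℕ} (h : Ch f a n b v) :
    ∃ (n : ℕ) (t : ℕ → ℝ), (∀ i, i < n → t i < t (i + 1)) ∧ a ≤ t 0 ∧ t n = b ∧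
      v ≤ ∑ i ∈ Finset.range n, max (f (t i) (t (i + 1))) 0 := by
  induction h with
  | zero t h => exact ⟨0, fun _ => t, by simp, h, rfl, by simp⟩
  | step n x r t u h hx hr ih =>
    have h1 := part_extend (fun x y => max (f x y) 0) a x r u hx ih
    have h2 : ∃ (n : ℕ) (t : ℕ → ℝ), (∀ i, i < n → t i < t (i + 1)) ∧ a ≤ t 0 ∧ t n = r ∧
      u + f x r ≤ ∑ i ∈ Finset.range n, max (f (t i) (t (i + 1))) 0 := by
      obtain ⟨n, t, h1, h2, h3, h4⟩ := h1
      exact ⟨n, t, h1, h2, h3, le_trans (by simp) h4⟩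
    rcases hr.eq_or_lt with rfl | hr
    · exact h2
    · obtain ⟨n, t, h1, h2, h3, h4⟩ := part_extend (fun x y => max (f x y) 0) a r t _ hr h2
      exact ⟨n, t, h1, h2, h3, le_trans (by simp) h4⟩

theorem ch_le_genVar {f : ℝ → ℝ → ℝ} {a b v : ℝ} {n : ℕ} (h : Ch f a n b v) :
    ENNReal.ofReal v ≤ genVar (fun x y => max (f x y) 0) a b := by
  obtain ⟨n, t, h1, h2, h3, h4⟩ := ch_part h
  unfold genVar
  refine le_trans (ENNReal.ofReal_le_ofReal h4) ?_
  exact le_iSup_of_le n (le_iSup_of_le t (le_iSup_of_le ⟨h1, h2, h3.le⟩ le_rfl))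

/-- The supremum of chain values. -/
noncomputable def chSup (f : ℝ → ℝ → ℝ) (a t : ℝ) : ℝ := sSup {v | ∃ n, Ch f a n t v}

/-- Chains are bounded. -/
def ChBdd (f : ℝ → ℝ → ℝ) (a : ℝ) : Prop := ∀ t, a ≤ t → ∃ M, ∀ n v, Ch f a n t v → v ≤ M

theorem le_chSup {f : ℝ → ℝ → ℝ} {a t v : ℝ} {n : ℕ} (hb : ChBdd f a) (h : Ch f a n t v) :
    v ≤ chSup f a t := by
  obtain ⟨M, hM⟩ := hb t h.le
  exact le_csSup ⟨M, fun w ⟨n, hw⟩ => hM n w hw⟩ ⟨n, h⟩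

theorem chSup_le {f : ℝ → ℝ → ℝ} {a t B : ℝ} (ht : a ≤ t)
    (h : ∀ n v, Ch f a n t v → v ≤ B) : chSup f a t ≤ B :=
  csSup_le ⟨0, 0, Ch.zero _ ht⟩ fun w ⟨n, hw⟩ => h n w hw

theorem chSup_nonneg {f : ℝ → ℝ → ℝ} {a t : ℝ} (hb : ChBdd f a) (ht : a ≤ t) :
    0 ≤ chSup f a t := le_chSup hb (Ch.zero _ ht)

theorem chSup_mono {f : ℝ → ℝ → ℝ} {a s t : ℝ} (hb : ChBdd f a) (hs : a ≤ s) (ht : s ≤ t) :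
    chSup f a s ≤ chSup f a t :=
  chSup_le hs fun _ _ h => le_chSup hb (h.mono ht)

theorem chSup_step {f : ℝ → ℝ → ℝ} {a s t : ℝ} (hb : ChBdd f a) (hs : a ≤ s) (ht : s < t) :
    chSup f a s + f s t ≤ chSup f a t := by
  have : chSup f a s ≤ chSup f a t - f s t := chSup_le hs fun n v h => by
    have := le_chSup hb (Ch.step n s t t v h ht le_rfl)
    linarith
  linarith

theorem genVar_eq {f : ℝ → ℝ → ℝ} {a t : ℝ} (hb : ChBdd f a) (ht : a ≤ t) :
    genVar (fun x y => max (f x y) 0) a t = ENNReal.ofReal (chSup f a t) := by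
  refine le_antisymm (genVar_le fun n v h => le_chSup hb h) ?_
  by_cases hT : genVar (fun x y => max (f x y) 0) a t = ⊤
  · rw [hT]; exact le_top
  · refine (ENNReal.ofReal_le_iff_le_toReal hT).2 (chSup_le ht fun n v h => ?_)
    exact (ENNReal.ofReal_le_iff_le_toReal hT).1 (ch_le_genVar h)

theorem ChBdd.dom {f g : ℝ → ℝ → ℝ} {a : ℝ} (hb : ChBdd g a) (hfg : ∀ x y, f x y ≤ g x y) :
    ChBdd f a := by
  intro t ht
  obtain ⟨M, hM⟩ := hb t ht
  refine ⟨M, fun n v h => ?_⟩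
  obtain ⟨w, hw, h'⟩ := h.dom hfg
  exact hw.trans (hM _ _ h')

/-- Upward truncated increment. -/
def up (p : ℝ → ℝ) (c : ℝ) : ℝ → ℝ → ℝ := fun x y => p y - p x - c

theorem core_mono {a c : ℝ} (hc : 0 < c) {p q : ℝ → ℝ} (hpq : ∀ x, q x = - p x)
    (hp : ChBdd (up p c) a) (hq : ChBdd (up q c) a) {s t v : ℝ} {n : ℕ} (hs : a ≤ s)
    (hst : s ≤ t) (h : Ch (up q c) a n t v) :
    chSup (up p c) a s - p s + v ≤ chSup (up p c) a t - p t + c + chSup (up q c) a s := by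
  have key : ∀ x y, a ≤ x → x ≤ y →
      chSup (up p c) a x - p x ≤ chSup (up p c) a y - p y + c := by
    intro x y hx hxy
    rcases hxy.eq_or_lt with rfl | hlt
    · linarith
    · have := chSup_step hp hx hlt
      simp only [up] at this ⊢
      linarith
  induction h with
  | zero t h =>
    have := chSup_nonneg hq hs
    have := key s t hs hst
    linarith
  | step n y r t v h hy hr ih =>
    have hay := h.le
    have e : up q c y r = p y - p r - c := by simp only [up, hpq]; ring
    rcases le_or_gt r s with h1 | h1
    · have := le_chSup hq (Ch.step n y r s v h hy h1)
      have := key s t hs hst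
      linarith
    · have hm := chSup_mono hp hs h1.le
      have hk := key r t (hs.trans h1.le) hr
      rcases le_or_gt y s with h2 | h2
      · have : v + (p y - p s - c) ≤ chSup (up q c) a s := by
          rcases h2.eq_or_lt with rfl | h2
          · have := le_chSup hq h
            linarith
          · have := le_chSup hq (Ch.step n y s s v h h2 le_rfl)
            have e : up q c y s = p y - p s - c := by simp only [up, hpq]; ring
            linarith
        linarith
      · have := ih h2.le
        have := chSup_mono hp hay hy.le
        linarith

theorem core_osc {a c : ℝ} (hc : 0 < c) {p q : ℝ → ℝ} (hpq : ∀ x, q x = - p x)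
    (hp : ChBdd (up p c) a) (hq : ChBdd (up q c) a) {s t : ℝ} (hs : a ≤ s)
    (hst : s ≤ t) :
    chSup (up p c) a s - p s + chSup (up q c) a t ≤
      chSup (up p c) a t - p t + c + chSup (up q c) a s := by
  have : chSup (up q c) a t ≤ chSup (up p c) a t - p t + c + chSup (up q c) a s
      - (chSup (up p c) a s - p s) := chSup_le (hs.trans hst) fun n v h => by
    have := core_mono hc hpq hp hq hs hst h
    linarith
  linarith

/-- Sum domination for chains with prescribed lengths. -/
def C1 (p q : ℝ → ℝ) (c a : ℝ) (T : ℝ → ℝ) (m n : ℕ) : Prop :=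
  ∀ t u v, Ch (up p c) a m t u → Ch (up q c) a n t v → u + v ≤ T t

/-- Properties of the dominating function. -/
structure Dom (p q : ℝ → ℝ) (c a : ℝ) (T : ℝ → ℝ) : Prop where
  hc : 0 < c
  hpq : ∀ x, q x = - p x
  mono : ∀ x y, a ≤ x → x ≤ y → T x ≤ T y
  sp : ∀ x y, a ≤ x → x < y → T x + (p y - p x - c) ≤ T y
  sq : ∀ x y, a ≤ x → x < y → T x + (p x - p y - c) ≤ T y
  cp : ∀ n t v, Ch (up p c) a n t v → v ≤ T t
  cq : ∀ n t v, Ch (up q c) a n t v → v ≤ T t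

theorem Dom.symm {p q : ℝ → ℝ} {c a : ℝ} {T : ℝ → ℝ} (h : Dom p q c a T) : Dom q p c a T where
  hc := h.hc
  hpq x := by rw [h.hpq]; ring
  mono := h.mono
  sp x y hx hy := by have := h.sq x y hx hy; rw [h.hpq, h.hpq]; linarith
  sq x y hx hy := by have := h.sp x y hx hy; rw [h.hpq, h.hpq]; linarith
  cp := h.cq
  cq := h.cp

theorem Dom.key {p q : ℝ → ℝ} {c a : ℝ} {T : ℝ → ℝ} (h : Dom p q c a T) {x y : ℝ} (hx : a ≤ x)
    (hxy : x ≤ y) : T x + p x ≤ T y + p y + c := by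
  have := h.hc
  rcases hxy.eq_or_lt with rfl | hlt
  · linarith
  · have := h.sq x y hx hlt
    linarith

theorem c2_of_c1 {p q : ℝ → ℝ} {c a : ℝ} {T : ℝ → ℝ} (H : Dom p q c a T) (n : ℕ) :
    ∀ m, (∀ m' ≤ m, C1 p q c a T m' n) → ∀ t y u v, y ≤ t → Ch (up p c) a m t u →
      Ch (up q c) a n y v → u + v + p y ≤ T t + p t + c := by
  intro m
  have hc := H.hc
  induction m with
  | zero =>
    intro _ t y u v hy hu hv
    cases hu
    have := H.cq _ _ _ hv
    have := H.key hv.le hy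
    linarith
  | succ m ih =>
    intro hC t y u v hy hu hv
    cases hu with
    | step _ x r _ u hu hx hr =>
    have hax := hu.le
    have hay := hv.le
    have e : up p c x r = p r - p x - c := rfl
    have hky := H.key hay hy
    have hkr := H.key (hax.trans hx.le) hr
    rcases le_or_gt r y with h1 | h1
    · have := hC (m + 1) le_rfl y _ v (Ch.step _ _ _ _ _ hu hx h1) hv
      linarith
    · rcases le_or_gt x y with h2 | h2
      · rcases le_or_gt (p y) (p r) with h3 | h3
        · have := hC (m + 1) le_rfl r _ v (Ch.step _ _ _ _ _ hu hx le_rfl) (hv.mono h1.le)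
          linarith
        · rcases h2.eq_or_lt with rfl | h2
          · have := hC m (by omega) x _ v hu hv
            linarith
          · have := hC (m + 1) le_rfl y _ v (Ch.step _ _ _ _ _ hu h2 le_rfl) hv
            have e : up p c x y = p y - p x - c := rfl
            linarith
      · have := ih (fun m' hm' => hC m' (by omega)) x y u v h2.le hu hv
        have := H.mono x r hax hx.le
        linarith

theorem c1_step {p q : ℝ → ℝ} {c a : ℝ} {T : ℝ → ℝ} (H : Dom p q c a T) (m n : ℕ)
    (hC : ∀ m' n', m' + n' < m + 1 + (n + 1) → C1 p q c a T m' n')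
    {t u v x y r s : ℝ} (hu : Ch (up p c) a m x u) (hx : x < r) (hr : r ≤ t)
    (hv : Ch (up q c) a n y v) (hy : y < s) (hs : s ≤ t) (hrs : r ≤ s) :
    u + up p c x r + (v + up q c y s) ≤ T t := by
  have hc := H.hc
  have hax := hu.le
  have hay := hv.le
  have e : up p c x r = p r - p x - c := rfl
  have e' : up q c y s = p y - p s - c := by simp only [up, H.hpq]; ring
  have hsy := H.sq y s hay hy
  have hst := H.mono s t (hay.trans hy.le) hs
  have hrx := H.sp x r hax hx
  have hxt := H.mono x t hax (by linarith)
  rcases le_or_gt r y with h1 | h1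
  · have := hC (m + 1) n (by omega) y _ v (Ch.step _ _ _ _ _ hu hx h1) hv
    linarith
  · rcases le_or_gt x y with h2 | h2
    · rcases le_or_gt (p y) (p r) with h3 | h3
      · rcases hrs.eq_or_lt with rfl | hlt
        · have := hC (m + 1) n (by omega) t _ v (Ch.step _ _ _ _ _ hu hx hr)
            (hv.mono (by linarith))
          linarith
        · have := hC (m + 1) n (by omega) r _ v (Ch.step _ _ _ _ _ hu hx le_rfl)
            (hv.mono h1.le)
          have := H.sq r s (by linarith) hlt
          linarith
      · rcases h2.eq_or_lt with rfl | h2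
        · have := hC m (n + 1) (by omega) t _ _ (hu.mono (by linarith))
            (Ch.step _ _ _ _ _ hv hy hs)
          linarith
        · have := hC (m + 1) n (by omega) y _ v (Ch.step _ _ _ _ _ hu h2 le_rfl) hv
          have e : up p c x y = p y - p x - c := rfl
          linarith
    · rcases le_or_gt (p r - p x) c with h3 | h3
      · have := hC m (n + 1) (by omega) t _ _ (hu.mono (by linarith))
            (Ch.step _ _ _ _ _ hv hy hs)
        linarith
      · have := c2_of_c1 H n m (fun m' hm' => hC m' n (by omega)) x y u v h2.le hu hv
        rcases hrs.eq_or_lt with rfl | hlt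
        · linarith
        · have := H.sq r s (by linarith) hlt
          linarith

theorem c1_all (N : ℕ) : ∀ {p q : ℝ → ℝ} {c a : ℝ} {T : ℝ → ℝ} (_ : Dom p q c a T) (m n : ℕ),
    m + n < N → C1 p q c a T m n := by
  induction N with
  | zero => intro p q c a T H m n h; omega
  | succ N ih =>
    intro p q c a T H m n h t u v hu hv
    have hu0 := hu
    have hv0 := hv
    cases hu with
    | zero => have := H.cq _ _ _ hv0; linarith
    | step m x r _ u hu hx hr =>
    cases hv with
    | zero => have := H.cp _ _ _ hu0; linarith
    | step n y s _ v hv hy hs =>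
    rcases le_total r s with hrs | hrs
    · exact c1_step H m n (fun m' n' h' => ih H m' n' (by omega)) hu hx hr hv hy hs hrs
    · have := c1_step H.symm n m (fun m' n' h' => ih H.symm m' n' (by omega)) hv hy hs hu hx hr hrs
      linarith

/-- Truncated absolute increment. -/
def ab (p : ℝ → ℝ) (c : ℝ) : ℝ → ℝ → ℝ := fun x y => |p y - p x| - c

theorem bdd_step {a c s t M K : ℝ} {p : ℝ → ℝ} (hK : 0 ≤ K) (hc : 0 < c)
    (hM : ∀ n v, Ch (ab p c) a n s v → v ≤ M)
    (hMn : 0 ≤ M)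
    (hosc : ∀ x y, s < x → x < t → s < y → y < t → |p y - p x| ≤ c)
    (hb : ∀ x, a ≤ x → x ≤ t → |p x| ≤ K) {n : ℕ} {r v : ℝ} (h : Ch (ab p c) a n r v) :
    (r < t → v ≤ M + 2 * K) ∧ (r ≤ t → v ≤ M + 4 * K) := by
  induction h with
  | zero r h => constructor <;> intro _ <;> linarith
  | step n x r r' u h hx hr ih =>
    have hax := h.le
    have e : ab p c x r = |p r - p x| - c := rfl
    have hab : r ≤ t → ab p c x r ≤ 2 * K := by
      intro h1
      have h2 := hb x hax (by linarith)
      have h3 := hb r (by linarith) h1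
      have := abs_sub (p r) (p x)
      linarith
    have main : r < t → u + ab p c x r ≤ M + 2 * K := by
      intro h1
      have hab := hab h1.le
      rcases le_or_gt r s with h2 | h2
      · have := hM _ _ (Ch.step _ _ _ _ _ h hx h2)
        linarith
      · rcases le_or_gt x s with h3 | h3
        · have := hM _ _ (h.mono h3)
          linarith
        · have := hosc x r h3 (by linarith) h2 h1
          have := ih.1 (by linarith)
          linarith
    refine ⟨fun h1 => main (by linarith), fun h1 => ?_⟩
    have := ih.1 (by linarith)
    have := hab (by linarith)
    linarith

/-- Locally good endpoint. -/
def Good (p : ℝ → ℝ) (c a t : ℝ) : Prop :=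
  ∃ M, 0 ≤ M ∧ (∀ n v, Ch (ab p c) a n t v → v ≤ M) ∧ ∀ x, a ≤ x → x ≤ t → |p x| ≤ M

theorem good_step {a c s t : ℝ} {p : ℝ → ℝ} (hc : 0 < c) (hst : s < t)
    (hosc : ∀ x y, s < x → x < t → s < y → y < t → |p y - p x| ≤ c) (h : Good p c a s) :
    Good p c a t := by
  obtain ⟨M, hM0, hM, hb⟩ := h
  set z := (s + t) / 2 with hz
  set K := M + |p z| + c + |p t| with hKd
  have h1 := abs_nonneg (p z)
  have h2 := abs_nonneg (p t)
  have hK0 : 0 ≤ K := by linarith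
  have hK : ∀ x, a ≤ x → x ≤ t → |p x| ≤ K := by
    intro x hx hxt
    rcases le_or_gt x s with h | h
    · have := hb x hx h
      linarith
    · rcases hxt.eq_or_lt with rfl | hlt
      · linarith
      · have := hosc z x (by linarith) (by linarith) h hlt
        have := abs_sub_abs_le_abs_sub (p x) (p z)
        linarith
  refine ⟨M + 4 * K, by linarith, fun n v h => (bdd_step hK0 hc hM hM0 hosc hK h).2 le_rfl,
    fun x hx hxt => ?_⟩
  have := hK x hx hxt
  linarith

theorem Good.down {a c s t : ℝ} {p : ℝ → ℝ} (hst : s ≤ t) (h : Good p c a t) : Good p c a s := by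
  obtain ⟨M, hM0, hM, hb⟩ := h
  exact ⟨M, hM0, fun n v h => hM n v (h.mono hst), fun x hx hxs => hb x hx (hxs.trans hst)⟩

theorem osc_of_tendsto {c L : ℝ} {p : ℝ → ℝ} (hc : 0 < c) {l : Filter ℝ}
    (h : Tendsto p l (𝓝 L)) : ∀ᶠ x in l, |p x - L| < c / 2 := by
  have := h (Metric.ball_mem_nhds L (half_pos hc))
  filter_upwards [this] with x hx
  simpa [Real.dist_eq] using hx

theorem osc_pair {c L u v : ℝ} (h1 : |u - L| < c / 2) (h2 : |v - L| < c / 2) : |v - u| ≤ c := by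
  rw [abs_lt] at h1 h2
  rw [abs_le]
  constructor <;> linarith [h1.1, h1.2, h2.1, h2.2]

theorem good_all {a c : ℝ} {p : ℝ → ℝ} (hc : 0 < c) (hreg : Regulated a p) :
    ∀ t, a ≤ t → Good p c a t := by
  have ha : Good p c a a := by
    refine ⟨|p a|, abs_nonneg _, fun n v h => ?_, fun x h1 h2 => by rw [le_antisymm h2 h1]⟩
    cases h with
    | zero => exact abs_nonneg _
    | step n x r _ u h hx hr => have := h.le; linarith
  by_contra! hcon
  obtain ⟨t, hat, hbad⟩ := hcon
  let S := {s | a ≤ s ∧ Good p c a s}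
  have hSb : BddAbove S := ⟨t, fun s hs => by
    by_contra! h
    exact hbad (hs.2.down h.le)⟩
  have haS : a ∈ S := ⟨le_rfl, ha⟩
  set τ := sSup S with hτ
  have haτ : a ≤ τ := le_csSup hSb haS
  have hlt : ∀ s, s < τ → Good p c a s := by
    intro s hs
    obtain ⟨s', hs', h⟩ := exists_lt_of_lt_csSup ⟨a, haS⟩ hs
    exact hs'.2.down h.le
  have hgτ : Good p c a τ := by
    rcases haτ.eq_or_lt with h | h
    · rw [← h]; exact ha
    · obtain ⟨L, hL⟩ := hreg.2 τ h
      obtain ⟨s, hs, hs'⟩ := (mem_nhdsLT_iff_exists_Ioo_subset).1 (osc_of_tendsto hc hL)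
      exact good_step hc hs (fun x y h1 h2 h3 h4 =>
        osc_pair (hs' ⟨h1, h2⟩) (hs' ⟨h3, h4⟩)) (hlt s hs)
  obtain ⟨L, hL⟩ := hreg.1 τ haτ
  obtain ⟨s, hs, hs'⟩ := (mem_nhdsGT_iff_exists_Ioo_subset).1 (osc_of_tendsto hc hL)
  have hgs : Good p c a s := good_step hc hs (fun x y h1 h2 h3 h4 =>
        osc_pair (hs' ⟨h1, h2⟩) (hs' ⟨h3, h4⟩)) hgτ
  have hs2 : τ < s := hs
  have : s ≤ τ := le_csSup hSb ⟨by linarith, hgs⟩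
  linarith

theorem var_le {f : ℝ → ℝ → ℝ} {a : ℝ} {W : ℝ → ℝ} (h0 : ∀ t, a ≤ t → 0 ≤ W t)
    (hm : ∀ s t, a ≤ s → s ≤ t → W s ≤ W t)
    (hf : ∀ s t, a ≤ s → s ≤ t → f s t ≤ W t - W s) {n : ℕ} {t v : ℝ} (h : Ch f a n t v) :
    v ≤ W t := by
  induction h with
  | zero t h => exact h0 t h
  | step n x r t u h hx hr ih =>
    have := h.le
    have := hf x r h.le hx.le
    have := hm r t (by linarith) hr
    linarith

/-- for a regulated `ψ : [a,∞) → ℝ` and `c > 0` there is a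
function `ψᶜ` of locally bounded variation, uniformly `c/2`-close to `ψ`
on `[a,∞)`, whose total, positive and negative variations on every
`[a,t]` equal the corresponding truncated variations of `ψ`. -/
theorem stmt2 (a c : ℝ) (ha : 0 ≤ a) (hc : 0 < c) (ψ : ℝ → ℝ)
    (hreg : Regulated a ψ) :
    ∃ φ : ℝ → ℝ,
      (∀ t, a ≤ t → |φ t - ψ t| ≤ c / 2) ∧
      (∀ t, a ≤ t →
        TV φ a t = TVc ψ c a t ∧ TVc ψ c a t < ⊤ ∧
        UTV φ a t = UTVc ψ c a t ∧
        DTV φ a t = DTVc ψ c a t) := by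
  have hT : ChBdd (ab ψ c) a := by
    intro t ht
    obtain ⟨M, _, hM, _⟩ := good_all hc hreg t ht
    exact ⟨M, hM⟩
  obtain ⟨q, hq⟩ : ∃ q : ℝ → ℝ, ∀ x, q x = - ψ x := ⟨fun x => - ψ x, fun _ => rfl⟩
  have hpq' : ∀ x, ψ x = - q x := fun x => by rw [hq]; ring
  have domp : ∀ x y, up ψ c x y ≤ ab ψ c x y := fun x y => by
    have := le_abs_self (ψ y - ψ x)
    simp only [up, ab]; linarith
  have domq : ∀ x y, up q c x y ≤ ab ψ c x y := fun x y => by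
    have := neg_le_abs (ψ y - ψ x)
    simp only [up, ab, hq]; linarith
  have hU := hT.dom domp
  have hD := hT.dom domq
  have hDom : Dom ψ q c a (chSup (ab ψ c) a) := by
    refine ⟨hc, hq, fun x y hx hy => chSup_mono hT hx hy, fun x y hx hy => ?_,
      fun x y hx hy => ?_, fun n t v h => ?_, fun n t v h => ?_⟩
    · have := chSup_step hT hx hy
      have := domp x y
      simp only [up] at this
      linarith
    · have := chSup_step hT hx hy
      have := domq x y
      simp only [up, hq] at this
      linarith
    · obtain ⟨w, hw, h'⟩ := h.dom domp
      exact hw.trans (le_chSup hT h')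
    · obtain ⟨w, hw, h'⟩ := h.dom domq
      exact hw.trans (le_chSup hT h')
  set U := chSup (up ψ c) a with hUd
  set D := chSup (up q c) a with hDd
  set T := chSup (ab ψ c) a with hTd
  have hUD : ∀ t, a ≤ t → U t + D t ≤ T t := by
    intro t ht
    have : U t ≤ T t - D t := chSup_le ht fun m u hu => by
      have : D t ≤ T t - u := chSup_le ht fun n v hv => by
        have := c1_all (m + n + 1) hDom m n (by omega) t u v hu hv
        linarith
      linarith
    linarith
  have hosc : ∀ s t, a ≤ s → a ≤ t → (U t - D t - ψ t) - (U s - D s - ψ s) ≤ c := by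
    intro s t hs ht
    rcases le_total s t with h | h
    · have := core_osc hc hpq' hD hU hs h
      rw [hq, hq] at this
      linarith
    · have := core_osc hc hq hU hD ht h
      linarith
  let X : ℝ → ℝ := fun t => U t - D t - ψ t
  have hbb : BddBelow (X '' Ici a) := ⟨X a - c, by
    rintro _ ⟨t, ht, rfl⟩
    have := hosc t a ht le_rfl
    simp only [X]; linarith⟩
  set m := sInf (X '' Ici a) with hm
  have hm1 : ∀ t, a ≤ t → m ≤ X t := fun t ht => csInf_le hbb ⟨t, ht, rfl⟩
  have hm2 : ∀ t, a ≤ t → X t ≤ m + c := by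
    intro t ht
    have : X t - c ≤ m := le_csInf ⟨X a, a, self_mem_Ici, rfl⟩ (by
      rintro _ ⟨s, hs, rfl⟩
      have := hosc s t hs ht
      simp only [X]; linarith)
    linarith
  obtain ⟨φ, hφ⟩ : ∃ φ : ℝ → ℝ, ∀ t, φ t = U t - D t - m - c / 2 := ⟨_, fun _ => rfl⟩
  have hcl : ∀ t, a ≤ t → |φ t - ψ t| ≤ c / 2 := by
    intro t ht
    have h1 := hm1 t ht
    have h2 := hm2 t ht
    simp only [X] at h1 h2
    rw [abs_le, hφ]
    constructor <;> linarith
  refine ⟨φ, hcl, fun t ht => ?_⟩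
  have mU : ∀ s t, a ≤ s → s ≤ t → U s ≤ U t := fun s t hs h => chSup_mono hU hs h
  have mD : ∀ s t, a ≤ s → s ≤ t → D s ≤ D t := fun s t hs h => chSup_mono hD hs h
  have zU : ∀ t, a ≤ t → 0 ≤ U t := fun t h => chSup_nonneg hU h
  have zD : ∀ t, a ≤ t → 0 ≤ D t := fun t h => chSup_nonneg hD h
  have eT : TVc ψ c a t = ENNReal.ofReal (T t) := genVar_eq hT ht
  have eU : UTVc ψ c a t = ENNReal.ofReal (U t) := genVar_eq hU ht
  have eD : DTVc ψ c a t = ENNReal.ofReal (D t) := by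
    rw [hDd, ← genVar_eq hD ht]
    unfold DTVc
    congr 1
    funext x y
    simp only [up, hq]
    congr 1
    ring
  refine ⟨le_antisymm ?_ ?_, ?_, le_antisymm ?_ ?_, le_antisymm ?_ ?_⟩
  · rw [eT]
    have e : TV φ = genVar (fun x y => max (|φ y - φ x|) 0) := by
      unfold TV; congr 1; funext x y; rw [max_eq_left (abs_nonneg _)]
    rw [e]
    refine genVar_le (f := fun x y => |φ y - φ x|) fun n v h => (var_le (W := fun t => U t + D t) ?_ ?_ ?_ h).trans (hUD t ht)
    · intro t h; have := zU t h; have := zD t h; linarith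
    · intro s t h h'; have := mU s t h h'; have := mD s t h h'; linarith
    · intro s t h h'; have := mU s t h h'; have := mD s t h h'
      simp only [hφ]; rw [abs_le]; constructor <;> linarith
  · refine genVar_mono (fun x y hx hy => max_le ?_ (abs_nonneg _)) t
    have h1 := abs_le.1 (hcl x hx)
    have h2 := abs_le.1 (hcl y hy)
    have h3 := le_abs_self (φ y - φ x)
    have h4 := neg_le_abs (φ y - φ x)
    have : |ψ y - ψ x| ≤ |φ y - φ x| + c := by
      rw [abs_le]; constructor <;> linarith [h1.1, h1.2, h2.1, h2.2]
    linarith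
  · rw [eT]; exact ENNReal.ofReal_lt_top
  · rw [eU]
    refine genVar_le (f := fun x y => φ y - φ x) fun n v h => var_le zU mU ?_ h
    intro s t h h'; have := mD s t h h'; simp only [hφ]; linarith
  · refine genVar_mono (fun x y hx hy => max_le_max ?_ le_rfl) t
    have h1 := abs_le.1 (hcl x hx)
    have h2 := abs_le.1 (hcl y hy)
    linarith [h1.1, h1.2, h2.1, h2.2]
  · rw [eD]
    refine genVar_le (f := fun x y => φ x - φ y) fun n v h => var_le zD mD ?_ h
    intro s t h h'; have := mU s t h h'; simp only [hφ]; linarith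
  · refine genVar_mono (fun x y hx hy => max_le_max ?_ le_rfl) t
    have h1 := abs_le.1 (hcl x hx)
    have h2 := abs_le.1 (hcl y hy)
    linarith [h1.1, h1.2, h2.1, h2.2]
end

section
/- Let u, α, β : [0,∞) → ℝ be regulated functions with α ≤ β pointwise, assume TV^{α,β}(u,[0,t]) < ∞ for every t ≥ 0, and let ξ⁰ ∈ [u(0) − β(0), u(0) − α(0)]. Define α⁰, β⁰, u^{ξ⁰} : [0,∞) → ℝ by α⁰(0) = β⁰(0) = 0, u^{ξ⁰}(0) = ξ⁰, and α⁰(t) = α(t), β⁰(t) = β(t), u^{ξ⁰}(t) = u(t) for t > 0. Then: (i) TV^{α⁰,β⁰}(u^{ξ⁰},[0,t]) < ∞ for all t ≥ 0; (ii) the function ξ(t) := ξ⁰ + UTV^{α⁰,β⁰}(u^{ξ⁰},[0,t]) − DTV^{α⁰,β⁰}(u^{ξ⁰},[0,t]) satisfies ξ(0) = ξ⁰, α(t) ≤ u(t) − ξ(t) ≤ β(t) for all t ≥ 0, UTV(ξ,[0,t]) = UTV^{α⁰,β⁰}(u^{ξ⁰},[0,t]) and DTV(ξ,[0,t]) = DTV^{α⁰,β⁰}(u^{ξ⁰},[0,t])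 for all t > 0, and for every χ : [0,∞) → ℝ with χ(0) = ξ⁰ and α ≤ u − χ ≤ β pointwise one has TV(ξ,[0,t]) ≤ TV(χ,[0,t]) for all t > 0. -/
open Filter Set Topology
open scoped ENNReal

theorem genVar_le_of (f : ℝ → ℝ → ℝ) (F : ℝ → ℝ) (T : ℝ)
    (hf : ∀ s t, 0 ≤ f s t) (hF : ∀ t, 0 ≤ t → t ≤ T → 0 ≤ F t)
    (h : ∀ s t, 0 ≤ s → s < t → t ≤ T → f s t ≤ F t - F s) :
    genVar f 0 T ≤ ENNReal.ofReal (F T) := by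
  unfold genVar
  refine iSup_le fun n => iSup_le fun p => iSup_le fun hp => ?_
  obtain ⟨h1, h2, h3⟩ := hp
  apply ENNReal.ofReal_le_ofReal
  have key : ∀ m, m ≤ n → p m ≤ T → 0 ≤ p m ∧
      ∑ i ∈ Finset.range m, f (p i) (p (i + 1)) ≤ F (p m) := by
    intro m
    induction m with
    | zero => intro _ hT; exact ⟨h2, by simpa using hF _ h2 hT⟩
    | succ m ih =>
      intro hm hT
      have hlt := h1 m (by omega)
      obtain ⟨h4, h5⟩ := ih (by omega) (by linarith)
      refine ⟨by linarith, ?_⟩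
      rw [Finset.sum_range_succ]
      have := h _ _ h4 hlt hT
      linarith
  obtain ⟨h4, h5⟩ := key n le_rfl h3
  rcases h3.eq_or_lt with h6 | h6
  · rw [← h6]; exact h5
  · have := h _ _ h4 h6 le_rfl
    have := hf (p n) T
    linarith

theorem le_genVar (f : ℝ → ℝ → ℝ) (a b : ℝ) (n : ℕ) (p : ℕ → ℝ)
    (hp : (∀ i, i < n → p i < p (i + 1)) ∧ a ≤ p 0 ∧ p n ≤ b) :
    ENNReal.ofReal (∑ i ∈ Finset.range n, f (p i) (p (i + 1))) ≤ genVar f a b := by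
  unfold genVar
  exact le_iSup_of_le n (le_iSup_of_le p (le_iSup_of_le hp le_rfl))

theorem genVar_mono_right (f : ℝ → ℝ → ℝ) (a s t : ℝ) (hst : s ≤ t) :
    genVar f a s ≤ genVar f a t := by
  conv_lhs => unfold genVar
  refine iSup_le fun n => iSup_le fun p => iSup_le fun hp => ?_
  exact le_genVar f a t n p ⟨hp.1, hp.2.1, hp.2.2.trans hst⟩

theorem genVar_mono_fun (f g : ℝ → ℝ → ℝ) (T : ℝ)
    (h : ∀ s t, 0 ≤ s → s < t → t ≤ T → f s t ≤ g s t) :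
    genVar f 0 T ≤ genVar g 0 T := by
  conv_lhs => unfold genVar
  refine iSup_le fun n => iSup_le fun p => iSup_le fun hp => ?_
  refine le_trans (ENNReal.ofReal_le_ofReal (Finset.sum_le_sum fun i hi => ?_))
    (le_genVar g 0 T n p hp)
  obtain ⟨h1, h2, h3⟩ := hp
  have hi : i < n := Finset.mem_range.1 hi
  have h4 : ∀ m, m ≤ n → 0 ≤ p m := by
    intro m
    induction m with
    | zero => intro _; exact h2
    | succ m ih => intro hm; have := h1 m (by omega); have := ih (by omega); linarith
  have h5 : ∀ m, i + 1 + m ≤ n → p (i + 1) ≤ p (i + 1 + m) := by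
    intro m
    induction m with
    | zero => intro _; exact le_rfl
    | succ m ih =>
      intro hm
      have := h1 (i + 1 + m) (by omega)
      have := ih (by omega)
      rw [← add_assoc]
      linarith
  have h6 := h5 (n - (i + 1)) (by omega)
  rw [show i + 1 + (n - (i + 1)) = n by omega] at h6
  exact h _ _ (h4 i hi.le) (h1 i hi) (by linarith)

theorem sum_append (f : ℝ → ℝ → ℝ) (a s t : ℝ) (n : ℕ) (p : ℕ → ℝ)
    (h1 : ∀ i, i < n → p i < p (i + 1)) (h2 : a ≤ p 0) (h3 : p n = s) (hst : s < t) :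
    ENNReal.ofReal (∑ i ∈ Finset.range n, f (p i) (p (i + 1)) + f s t) ≤ genVar f a t := by
  have := le_genVar f a t (n + 1) (fun i => if i ≤ n then p i else t) ?_
  · refine le_trans (le_of_eq ?_) this
    congr 1
    rw [Finset.sum_range_succ]
    congr 1
    · apply Finset.sum_congr rfl
      intro i hi
      have hi : i < n := Finset.mem_range.1 hi
      have hq1 : i ≤ n := by omega
      have hq2 : i + 1 ≤ n := by omega
      simp [hq1, hq2]
    · simp [h3]
  · refine ⟨?_, by simpa using h2, by simp⟩
    intro i hi
    rcases (show i ≤ n by omega).eq_or_lt with h | h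
    · subst h; simp [h3, hst]
    · have hq1 : i ≤ n := by omega
      have hq2 : i + 1 ≤ n := by omega
      simpa [hq1, hq2] using h1 i h

theorem genVar_append (f : ℝ → ℝ → ℝ) (hf : ∀ s t, 0 ≤ f s t) (s t : ℝ) (hs : 0 ≤ s)
    (hst : s < t) (hfin : genVar f 0 t < ⊤) :
    (genVar f 0 s).toReal + f s t ≤ (genVar f 0 t).toReal := by
  have hfs : genVar f 0 s < ⊤ := (genVar_mono_right f 0 s t hst.le).trans_lt hfin
  suffices h : genVar f 0 s ≤ ENNReal.ofReal ((genVar f 0 t).toReal - f s t) by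
    have h0 : f s t ≤ (genVar f 0 t).toReal := by
      have := sum_append f 0 s t 0 (fun _ => s) (by simp) hs rfl hst
      simp only [Finset.range_zero, Finset.sum_empty, zero_add] at this
      rwa [ENNReal.ofReal_le_iff_le_toReal hfin.ne] at this
    have := ENNReal.toReal_le_of_le_ofReal (by linarith) h
    linarith
  conv_lhs => unfold genVar
  refine iSup_le fun n => iSup_le fun p => iSup_le fun hp => ?_
  obtain ⟨h1, h2, h3⟩ := hp
  apply ENNReal.ofReal_le_ofReal
  have key : ∑ i ∈ Finset.range n, f (p i) (p (i + 1)) + f s t ≤ (genVar f 0 t).toReal := by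
    rw [← ENNReal.ofReal_le_iff_le_toReal hfin.ne]
    rcases h3.eq_or_lt with h | h
    · exact sum_append f 0 s t n p h1 h2 h hst
    · have := sum_append f 0 s t (n + 1) (fun i => if i ≤ n then p i else s) ?_
        (by simpa using h2) (by simp) hst
      · refine le_trans (ENNReal.ofReal_le_ofReal ?_) this
        rw [Finset.sum_range_succ]
        have e : ∑ i ∈ Finset.range n, f (if i ≤ n then p i else s)
            (if i + 1 ≤ n then p (i + 1) else s) =
            ∑ i ∈ Finset.range n, f (p i) (p (i + 1)) := by
          apply Finset.sum_congr rfl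
          intro i hi
          have hi : i < n := Finset.mem_range.1 hi
          have hq1 : i ≤ n := by omega
          have hq2 : i + 1 ≤ n := by omega
          simp [hq1, hq2]
        rw [e]
        have := hf (if n ≤ n then p n else s) (if n + 1 ≤ n then p (n + 1) else s)
        linarith
      · intro i hi
        rcases (show i ≤ n by omega).eq_or_lt with hq1 | hq1
        · subst hq1; simp [h]
        · have h4 : i ≤ n := by omega
          have h5 : i + 1 ≤ n := by omega
          simpa [h4, h5] using h1 i hq1
  linarith

/-- One half of the band property. -/
theorem band_half (l h : ℝ → ℝ) (c T : ℝ) (hT : 0 ≤ T)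
    (hlh : ∀ t, 0 ≤ t → l t ≤ h t) (h0 : h 0 = c)
    (hU : genVar (fun s t => max (l t - h s) 0) 0 T < ⊤) :
    (genVar (fun s t => max (l s - h t) 0) 0 T).toReal + l T ≤
      c + (genVar (fun s t => max (l t - h s) 0) 0 T).toReal := by
  set U : ℝ → ℝ := fun r => (genVar (fun s t => max (l t - h s) 0) 0 r).toReal with hUd
  have app : ∀ s t, 0 ≤ s → s ≤ t → t ≤ T → U s + max (l t - h s) 0 ≤ U t := by
    intro s t hs hst htT
    rcases hst.eq_or_lt with e | e
    · subst e
      have := hlh s hs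
      rw [max_eq_right (by linarith)]; linarith
    · exact genVar_append _ (fun _ _ => le_max_right _ _) s t hs e
        ((genVar_mono_right _ 0 t T htT).trans_lt hU)
  have hU0 : ∀ r, 0 ≤ U r := fun r => ENNReal.toReal_nonneg
  have h00 : l T ≤ c + U T := by
    have := app 0 T le_rfl hT le_rfl
    have := le_max_left (l T - h 0) 0
    have := hU0 0
    linarith
  suffices hs : genVar (fun s t => max (l s - h t) 0) 0 T ≤ ENNReal.ofReal (c + U T - l T) by
    have := ENNReal.toReal_le_of_le_ofReal (by linarith) hs
    linarith
  conv_lhs => unfold genVar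
  refine iSup_le fun n => iSup_le fun p => iSup_le fun hp => ?_
  obtain ⟨h1, h2, h3⟩ := hp
  apply ENNReal.ofReal_le_ofReal
  have key : ∀ m, m ≤ n → 0 ≤ p m ∧ ∀ t, p m ≤ t → t ≤ T →
      ∑ i ∈ Finset.range m, max (l (p i) - h (p (i + 1))) 0 + l t ≤ c + U t := by
    intro m
    induction m with
    | zero =>
      intro _
      refine ⟨h2, fun t ht htT => ?_⟩
      have := app 0 t le_rfl (by linarith) htT
      have := le_max_left (l t - h 0) 0
      have := hU0 0
      simp only [Finset.range_zero, Finset.sum_empty]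
      linarith
    | succ m ih =>
      intro hm
      obtain ⟨h4, h5⟩ := ih (by omega)
      have hlt := h1 m (by omega)
      refine ⟨by linarith, fun t ht htT => ?_⟩
      rw [Finset.sum_range_succ]
      rcases le_total (l (p m) - h (p (m + 1))) 0 with hc | hc
      · rw [max_eq_right hc]
        have := h5 t (by linarith) htT
        linarith
      · rw [max_eq_left hc]
        have a1 := h5 (p m) le_rfl (by linarith)
        have a2 := app (p m) (p (m + 1)) h4 hlt.le (by linarith)
        have a3 := app (p (m + 1)) t (by linarith) ht htT
        have a4 := le_max_right (l (p (m + 1)) - h (p m)) 0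
        have a5 := le_max_left (l t - h (p (m + 1))) 0
        linarith
  have := (key n le_rfl).2 T h3 le_rfl
  linarith

/-- the play operator with boundaries `α ≤ β` and starting
point `ξ⁰` is given by the Jordan-like formula
`ξ = ξ⁰ + UTV^{α⁰,β⁰}(u^{ξ⁰},[0,·]) - DTV^{α⁰,β⁰}(u^{ξ⁰},[0,·])`,
where `α⁰, β⁰, u^{ξ⁰}` are the modifications at `0`; the output stays in
the band, realises its positive/negative variations via the truncated
ones, and has minimal total variation among all admissible functions. -/
theorem stmt11 (u α β : ℝ → ℝ)
    (hu : Regulated 0 u) (hα : Regulated 0 α) (hβ : Regulated 0 β)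
    (hαβ : ∀ t, 0 ≤ t → α t ≤ β t)
    (hfin : ∀ t, 0 ≤ t → TVab u α β 0 t < ⊤)
    (ξ₀ : ℝ) (hξ₀ : u 0 - β 0 ≤ ξ₀ ∧ ξ₀ ≤ u 0 - α 0)
    (α₀ β₀ u₀ : ℝ → ℝ)
    (hα₀ : α₀ 0 = 0 ∧ ∀ t, 0 < t → α₀ t = α t)
    (hβ₀ : β₀ 0 = 0 ∧ ∀ t, 0 < t → β₀ t = β t)
    (hu₀ : u₀ 0 = ξ₀ ∧ ∀ t, 0 < t → u₀ t = u t)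
    (ξ : ℝ → ℝ)
    (hξ : ∀ t, ξ t =
      ξ₀ + (UTVab u₀ α₀ β₀ 0 t).toReal - (DTVab u₀ α₀ β₀ 0 t).toReal) :
    (∀ t, 0 ≤ t → TVab u₀ α₀ β₀ 0 t < ⊤) ∧
    ξ 0 = ξ₀ ∧
    (∀ t, 0 ≤ t → α t ≤ u t - ξ t ∧ u t - ξ t ≤ β t) ∧
    (∀ t, 0 < t →
      UTV ξ 0 t = UTVab u₀ α₀ β₀ 0 t ∧
      DTV ξ 0 t = DTVab u₀ α₀ β₀ 0 t) ∧
    (∀ χ : ℝ → ℝ, χ 0 = ξ₀ →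
      (∀ t, 0 ≤ t → α t ≤ u t - χ t ∧ u t - χ t ≤ β t) →
      ∀ t, 0 < t → TV ξ 0 t ≤ TV χ 0 t) := by
  set l : ℝ → ℝ := fun t => u₀ t - β₀ t with hl
  set h : ℝ → ℝ := fun t => u₀ t - α₀ t with hh
  have eU : UTVab u₀ α₀ β₀ = genVar (fun s t => max (l t - h s) 0) := by
    unfold UTVab
    congr 1
    funext s t
    simp only [hl, hh]
    congr 1
    ring
  have eD : DTVab u₀ α₀ β₀ = genVar (fun s t => max (l s - h t) 0) := by
    unfold DTVab
    congr 1
    funext s t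
    simp only [hl, hh]
    congr 1
    ring
  have l0 : l 0 = ξ₀ := by simp only [hl]; rw [hu₀.1, hβ₀.1]; ring
  have h0 : h 0 = ξ₀ := by simp only [hh]; rw [hu₀.1, hα₀.1]; ring
  have lt : ∀ t, 0 < t → l t = u t - β t := by
    intro t ht; simp only [hl]; rw [hu₀.2 t ht, hβ₀.2 t ht]
  have hupp : ∀ t, 0 < t → h t = u t - α t := by
    intro t ht; simp only [hh]; rw [hu₀.2 t ht, hα₀.2 t ht]
  have hlh : ∀ t, 0 ≤ t → l t ≤ h t := by
    intro t ht
    rcases ht.eq_or_lt with e | e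
    · rw [← e, l0, h0]
    · rw [lt t e, hupp t e]; linarith [hαβ t ht]
  -- part (i)
  have p1 : ∀ t, 0 ≤ t → TVab u₀ α₀ β₀ 0 t < ⊤ := by
    intro T hT
    have hC : 0 ≤ β 0 - α 0 := by linarith [hαβ 0 le_rfl]
    refine lt_of_le_of_lt (genVar_le_of _
      (fun t => if 0 < t then (TVab u α β 0 t).toReal + (β 0 - α 0) else 0) T
      (fun _ _ => le_max_right _ _) ?_ ?_) ENNReal.ofReal_lt_top
    · intro t _ _
      split_ifs
      · have : 0 ≤ (TVab u α β 0 t).toReal := ENNReal.toReal_nonneg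
        linarith
      · exact le_rfl
    · intro s t hs hst htT
      have ht : 0 < t := by linarith
      have A := genVar_append (fun s t =>
        max (|(u t - (α t + β t) / 2) - (u s - (α s + β s) / 2)|
          - ((β t - α t) + (β s - α s)) / 2) 0) (fun _ _ => le_max_right _ _) s t hs hst
          (hfin t ht.le)
      change (TVab u α β 0 s).toReal + _ ≤ (TVab u α β 0 t).toReal at A
      rw [if_pos ht, hu₀.2 t ht, hα₀.2 t ht, hβ₀.2 t ht]
      rcases hs.eq_or_lt with e | e
      · subst e
        rw [if_neg (lt_irrefl _), hu₀.1, hα₀.1, hβ₀.1]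
        have A0 : 0 ≤ (TVab u α β 0 0).toReal := ENNReal.toReal_nonneg
        have A1 := le_max_left (|(u t - (α t + β t) / 2) - (u 0 - (α 0 + β 0) / 2)|
          - ((β t - α t) + (β 0 - α 0)) / 2) 0
        have A2 := le_max_right (|(u t - (α t + β t) / 2) - (u 0 - (α 0 + β 0) / 2)|
          - ((β t - α t) + (β 0 - α 0)) / 2) 0
        have A3 := le_abs_self ((u t - (α t + β t) / 2) - (u 0 - (α 0 + β 0) / 2))
        have A4 := neg_abs_le ((u t - (α t + β t) / 2) - (u 0 - (α 0 + β 0) / 2))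
        obtain ⟨B1, B2⟩ := hξ₀
        apply max_le
        · rw [sub_le_iff_le_add]
          apply abs_le.2
          constructor <;> linarith
        · linarith
      · rw [if_pos e, hu₀.2 s e, hα₀.2 s e, hβ₀.2 s e]
        linarith
  have fU : ∀ t, 0 ≤ t → genVar (fun s t => max (l t - h s) 0) 0 t < ⊤ := by
    intro t ht
    refine lt_of_le_of_lt ?_ (p1 t ht)
    rw [← eU]
    refine genVar_mono_fun _ _ _ fun s t _ _ _ => max_le_max ?_ le_rfl
    have := le_abs_self ((u₀ t - (α₀ t + β₀ t) / 2) - (u₀ s - (α₀ s + β₀ s) / 2))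
    linarith
  have fD : ∀ t, 0 ≤ t → genVar (fun s t => max (l s - h t) 0) 0 t < ⊤ := by
    intro t ht
    refine lt_of_le_of_lt ?_ (p1 t ht)
    rw [← eD]
    refine genVar_mono_fun _ _ _ fun s t _ _ _ => max_le_max ?_ le_rfl
    have := neg_abs_le ((u₀ t - (α₀ t + β₀ t) / 2) - (u₀ s - (α₀ s + β₀ s) / 2))
    linarith
  simp only [eU, eD] at hξ ⊢
  set U : ℝ → ℝ := fun r => (genVar (fun s t => max (l t - h s) 0) 0 r).toReal with hUd
  set D : ℝ → ℝ := fun r => (genVar (fun s t => max (l s - h t) 0) 0 r).toReal with hDd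
  have hxi : ∀ t, ξ t = ξ₀ + U t - D t := hξ
  have U0 : ∀ r, 0 ≤ U r := fun r => ENNReal.toReal_nonneg
  have D0 : ∀ r, 0 ≤ D r := fun r => ENNReal.toReal_nonneg
  have aU : ∀ s t, 0 ≤ s → s < t → U s + max (l t - h s) 0 ≤ U t := fun s t hs hst =>
    genVar_append _ (fun _ _ => le_max_right _ _) s t hs hst (fU t (by linarith))
  have aD : ∀ s t, 0 ≤ s → s < t → D s + max (l s - h t) 0 ≤ D t := fun s t hs hst =>
    genVar_append _ (fun _ _ => le_max_right _ _) s t hs hst (fD t (by linarith))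
  have mU : ∀ s t, 0 ≤ s → s < t → U s ≤ U t := fun s t hs hst => by
    linarith [aU s t hs hst, le_max_right (l t - h s) 0]
  have mD : ∀ s t, 0 ≤ s → s < t → D s ≤ D t := fun s t hs hst => by
    linarith [aD s t hs hst, le_max_right (l s - h t) 0]
  have p2 : ξ 0 = ξ₀ := by
    have z : ∀ f : ℝ → ℝ → ℝ, (∀ s t, 0 ≤ f s t) → genVar f 0 0 = 0 := by
      intro f hf
      have := genVar_le_of f (fun _ => 0) 0 hf (fun _ _ _ => le_rfl)
        (fun s t h1 h2 h3 => by linarith)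
      simpa using this
    rw [hξ, z _ (fun _ _ => le_max_right _ _), z _ (fun _ _ => le_max_right _ _)]
    simp
  have b1 : ∀ t, 0 ≤ t → l t ≤ ξ t := by
    intro t ht
    have := band_half l h ξ₀ t ht hlh h0 (fU t ht)
    change D t + l t ≤ ξ₀ + U t at this
    rw [hxi]; linarith
  have b2 : ∀ t, 0 ≤ t → ξ t ≤ h t := by
    intro t ht
    have e1 : (fun s t => max ((fun r => - h r) s - (fun r => - l r) t) 0) =
        (fun s t => max (l t - h s) 0) := by
      funext s t; congr 1; ring
    have e2 : (fun s t => max ((fun r => - h r) t - (fun r => - l r) s) 0) =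
        (fun s t => max (l s - h t) 0) := by
      funext s t; congr 1; ring
    have := band_half (fun r => - h r) (fun r => - l r) (-ξ₀) t ht
      (fun t ht => by simpa using hlh t ht) (by simp [l0])
      (by rw [e2]; exact fD t ht)
    rw [e1, e2] at this
    change U t + - h t ≤ -ξ₀ + D t at this
    rw [hxi]; linarith
  refine ⟨p1, p2, ?_, ?_, ?_⟩
  · intro t ht
    rcases ht.eq_or_lt with e | e
    · subst e
      rw [p2]
      constructor <;> linarith [hξ₀.1, hξ₀.2]
    · have := b1 t ht
      have := b2 t ht
      have := lt t e
      have := hupp t e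
      constructor <;> linarith
  · intro T hT
    constructor
    · apply le_antisymm
      · have := genVar_le_of (fun s t => max (ξ t - ξ s) 0) U T (fun _ _ => le_max_right _ _)
          (fun r _ _ => U0 r) (fun s t hs hst _ => by
            have := mU s t hs hst
            have := mD s t hs hst
            apply max_le
            · rw [hxi t, hxi s]; linarith
            · linarith)
        refine this.trans (le_of_eq ?_)
        exact ENNReal.ofReal_toReal (fU T hT.le).ne
      · refine genVar_mono_fun _ _ _ fun s t hs hst _ => max_le_max ?_ le_rfl
        linarith [b1 t (by linarith), b2 s hs]
    · apply le_antisymm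
      · have := genVar_le_of (fun s t => max (ξ s - ξ t) 0) D T (fun _ _ => le_max_right _ _)
          (fun r _ _ => D0 r) (fun s t hs hst _ => by
            have := mU s t hs hst
            have := mD s t hs hst
            apply max_le
            · rw [hxi t, hxi s]; linarith
            · linarith)
        refine this.trans (le_of_eq ?_)
        exact ENNReal.ofReal_toReal (fD T hT.le).ne
      · refine genVar_mono_fun _ _ _ fun s t hs hst _ => max_le_max ?_ le_rfl
        linarith [b1 s hs, b2 t (by linarith)]
  · intro χ hχ0 hχ T hT
    by_cases hinf : TV χ 0 T = ⊤
    · rw [hinf]; exact le_top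
    have c1 : ∀ t, 0 ≤ t → l t ≤ χ t ∧ χ t ≤ h t := by
      intro t ht
      rcases ht.eq_or_lt with e | e
      · subst e
        rw [l0, h0, hχ0]; exact ⟨le_rfl, le_rfl⟩
      · have := hχ t ht
        rw [lt t e, hupp t e]
        constructor <;> linarith [this.1, this.2]
    set V : ℝ → ℝ := fun r => (TV χ 0 r).toReal with hV
    have V0 : ∀ r, 0 ≤ V r := fun r => ENNReal.toReal_nonneg
    have aV : ∀ s t, 0 ≤ s → s < t → t ≤ T → V s + |χ t - χ s| ≤ V t := fun s t hs hst htT =>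
      genVar_append (fun s t => |χ t - χ s|) (fun _ _ => abs_nonneg _) s t hs hst
        ((genVar_mono_right _ 0 t T htT).trans_lt (lt_top_iff_ne_top.2 hinf))
    have bV : ∀ t, 0 ≤ t → t ≤ T → |χ t - ξ₀| ≤ V t := by
      intro t ht htT
      rcases ht.eq_or_lt with e | e
      · subst e; rw [hχ0]; simpa using V0 0
      · have := aV 0 t le_rfl e htT
        rw [hχ0] at this
        linarith [V0 0]
    have i1 : U T ≤ (V T + (χ T - ξ₀)) / 2 := by
      apply ENNReal.toReal_le_of_le_ofReal
      · linarith [bV T hT.le le_rfl, neg_abs_le (χ T - ξ₀)]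
      · refine genVar_le_of _ (fun r => (V r + (χ r - ξ₀)) / 2) T
          (fun _ _ => le_max_right _ _) ?_ ?_
        · intro t ht htT
          linarith [bV t ht htT, neg_abs_le (χ t - ξ₀)]
        · intro s t hs hst htT
          have := aV s t hs hst htT
          have := neg_abs_le (χ t - χ s)
          have := le_abs_self (χ t - χ s)
          have := c1 s hs
          have := c1 t (by linarith)
          apply max_le <;> linarith
    have i2 : D T ≤ (V T - (χ T - ξ₀)) / 2 := by
      apply ENNReal.toReal_le_of_le_ofReal
      · linarith [bV T hT.le le_rfl, le_abs_self (χ T - ξ₀)]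
      · refine genVar_le_of _ (fun r => (V r - (χ r - ξ₀)) / 2) T
          (fun _ _ => le_max_right _ _) ?_ ?_
        · intro t ht htT
          linarith [bV t ht htT, le_abs_self (χ t - ξ₀)]
        · intro s t hs hst htT
          have := aV s t hs hst htT
          have := neg_abs_le (χ t - χ s)
          have := le_abs_self (χ t - χ s)
          have := c1 s hs
          have := c1 t (by linarith)
          apply max_le <;> linarith
    have i3 : TV ξ 0 T ≤ ENNReal.ofReal (U T + D T) := by
      refine genVar_le_of _ (fun r => U r + D r) T (fun _ _ => abs_nonneg _)
        (fun r _ _ => add_nonneg (U0 r) (D0 r)) ?_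
      intro s t hs hst _
      have := mU s t hs hst
      have := mD s t hs hst
      rw [hxi t, hxi s]
      apply abs_le.2
      constructor <;> linarith
    refine i3.trans ((ENNReal.ofReal_le_ofReal (by linarith : U T + D T ≤ V T)).trans ?_)
    exact ENNReal.ofReal_toReal_le
end
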